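/- (Disentangling Lemma.) Let M ⊆ Λ be a correctable region such that the external boundary ∂₊M is also correctable. Then there exist a unitary matrix U supported on ∂M, a unit vector φ in the Hilbert space spanned by basis vectors labelled by (M → Fin q), and an orthogonal projector Π' on the Hilbert space spanned by basis vectors labelled by ((Λ∖M) → Fin q), such that, under the reindexing of (Λ → Fin q) as (M → Fin q) × ((Λ∖M) → Fin q), one has U Π U† = |φ⟩⟨φ| ⊗ Π' (the Kronecker product of the rank-one projector onto φ with Π'). -/

import Mathlib

/-!
The proof reads the disentangling unitary off a Uhlmann-type argument, without decomposing the
boundary algebras.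

*Locality.* Among the sites outside `∂M`, write `A` for those in `M` and `D` for those in `Mᶜ`. A
constraint that is not contained in `M` misses `A`, and one that is not contained in `Mᶜ` misses
`D`. So `Π = P Q` with `P` supported on `M` and `Q` commuting with all operators on `A`
(`exists_factor`), and likewise with `Mᶜ` and `D`. For `O` on `M` and `O'` on `D`, correctability
of `M` then gives `Π O O' Π = c(O) Π O' Π` (`decouple`).

*The target.* Fix a nonzero entry `Π z k`. The column `k` of `Π`, restricted to configurations that
equal `z` outside `M`, is a nonzero vector `φ₀` on `M` in the support of the reduced code state
(`localVec`). Any operator on `M` acting on the code as a scalar acts on `φ₀` as the same scalar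
(`mul_localOp`); applied to `P O P`, this shows that `φ₀` reproduces the code expectation values of
operators `O` on `A` (`localOp_expect`). Let `T = |φ₀⟩⟨z| ⊗ I` (`localOp`). By correctability of `M`,
`Π T† T Π = r Π` with `r > 0`, so `F = r^(-1/2) T Π` is an isometry on the code space, and for `O` on
`A` and `O'` on `D` the two facts above yield `F† O O' F = Π O O' Π`.

*The unitary.* Since the columns of `F` and `Π` have the same matrix elements for all operators on
the complement of `∂M`, reshaping them into matrices whose row index is a configuration of `∂M`
gives equal Gram matrices, and there is a unitary `U` on `∂M` with `U Π = F`
(`exists_unitary_supportedOn`). Then `U Π U† = F F† = r⁻¹ T Π T†`, which is `|φ₀⟩⟨φ₀|` tensored with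
a multiple of the block `⟨z|Π|z⟩` of `Π`. That block, suitably rescaled, is a projector because
`U Π U†` is one.
-/

open Matrix
open scoped Kronecker

noncomputable section

/-- The natural reindexing of configurations `Λ → Fin q` as pairs of configurations
on a region `S` and its complement. -/
def siteSplit (q : ℕ) {Λ : Type*} [DecidableEq Λ] (S : Finset Λ) :
    (Λ → Fin q) ≃ ({u : Λ // u ∈ S} → Fin q) × ({u : Λ // u ∉ S} → Fin q) :=
  (Equiv.arrowCongr (Equiv.sumCompl (fun u : Λ => u ∈ S)).symm (Equiv.refl (Fin q))).trans
    (Equiv.sumArrowEquivProdArrow _ _ _)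

/-- An operator is supported on `S ⊆ Λ` if, after the natural reindexing, it is the
Kronecker product of a matrix acting on the `S`-factor with the identity on the complement. -/
def SupportedOn (q : ℕ) {Λ : Type*} [Fintype Λ] [DecidableEq Λ] (S : Finset Λ)
    (O : Matrix (Λ → Fin q) (Λ → Fin q) ℂ) : Prop :=
  ∃ A : Matrix ({u : Λ // u ∈ S} → Fin q) ({u : Λ // u ∈ S} → Fin q) ℂ,
    O.submatrix (siteSplit q S).symm (siteSplit q S).symm =
      A ⊗ₖ (1 : Matrix ({u : Λ // u ∉ S} → Fin q) ({u : Λ // u ∉ S} → Fin q) ℂ)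

/-- A commuting-projector code on the set of sites `Λ`, with qudits of dimension `q`:
pairwise commuting orthogonal projectors `P a` supported on regions `S a`, whose product
(the codespace projector) is nonzero. -/
structure CommProjCode (q : ℕ) (Λ : Type*) [Fintype Λ] [DecidableEq Λ] where
  m : ℕ
  S : Fin m → Finset Λ
  P : Fin m → Matrix (Λ → Fin q) (Λ → Fin q) ℂ
  herm : ∀ a, (P a).IsHermitian
  idem : ∀ a, P a * P a = P a
  comm : ∀ a b, P a * P b = P b * P a
  supp : ∀ a, SupportedOn q (S a) (P a)
  nonzero : ((List.finRange m).map P).prod ≠ 0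

namespace CommProjCode

variable {q : ℕ} {Λ : Type*} [Fintype Λ] [DecidableEq Λ]

/-- The codespace projector `Π = Π_1 ⋯ Π_m`. -/
def proj (code : CommProjCode q Λ) : Matrix (Λ → Fin q) (Λ → Fin q) ℂ :=
  ((List.finRange code.m).map code.P).prod

/-- A region `M` is correctable iff `Π O Π = c(O) Π` for every operator `O` supported
on `M` (the Knill–Laflamme condition for the erasure of `M`). -/
def Correctable (code : CommProjCode q Λ) (M : Finset Λ) : Prop :=
  ∀ O : Matrix (Λ → Fin q) (Λ → Fin q) ℂ, SupportedOn q M O →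
    ∃ c : ℂ, code.proj * O * code.proj = c • code.proj

end CommProjCode

/-- The external boundary `∂₊M`: sites outside `M` touched by a constraint that
also touches `M`. -/
def CommProjCode.extBoundary {q : ℕ} {Λ : Type*} [Fintype Λ] [DecidableEq Λ]
    (code : CommProjCode q Λ) (M : Finset Λ) : Finset Λ :=
  Finset.univ.filter (fun u => u ∉ M ∧ ∃ a, u ∈ code.S a ∧ (code.S a ∩ M).Nonempty)

/-- The internal boundary `∂₋M = ∂₊(Λ∖M)`. -/
def CommProjCode.intBoundary {q : ℕ} {Λ : Type*} [Fintype Λ] [DecidableEq Λ]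
    (code : CommProjCode q Λ) (M : Finset Λ) : Finset Λ :=
  code.extBoundary Mᶜ

/-- The boundary `∂M = ∂₋M ∪ ∂₊M`. -/
def CommProjCode.boundary {q : ℕ} {Λ : Type*} [Fintype Λ] [DecidableEq Λ]
    (code : CommProjCode q Λ) (M : Finset Λ) : Finset Λ :=
  code.intBoundary M ∪ code.extBoundary M

/-! ### Operators supported on a region -/

section Support

lemma siteSplit_symm_apply {q : ℕ} {Λ : Type*} [DecidableEq Λ] (S : Finset Λ)
    (p : ({u : Λ // u ∈ S} → Fin q) × ({u : Λ // u ∉ S} → Fin q)) (u : Λ) :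
    (siteSplit q S).symm p u = if h : u ∈ S then p.1 ⟨u, h⟩ else p.2 ⟨u, h⟩ := by
  obtain ⟨x, rfl⟩ := (siteSplit q S).surjective p
  rw [Equiv.symm_apply_apply]
  split_ifs <;> rfl

variable {q : ℕ} {Λ : Type*} [Fintype Λ] [DecidableEq Λ]

/-- Support on `S` expressed through matrix entries on full configurations: `O` is diagonal off `S`,
and its entries do not change when the values off `S` are replaced by those of a common `z`. -/
def EntrySupp (S : Finset Λ) (O : Matrix (Λ → Fin q) (Λ → Fin q) ℂ) : Prop :=
  ∀ x y z, O x y = if (∀ u, u ∉ S → x u = y u) then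
    O (S.piecewise x z) (S.piecewise y z) else 0

lemma SupportedOn.entrySupp {S : Finset Λ} {O : Matrix (Λ → Fin q) (Λ → Fin q) ℂ}
    (h : SupportedOn q S O) : EntrySupp S O := by
  obtain ⟨A, hA⟩ := h
  have key : ∀ x y, O x y = A (fun u => x u) (fun u => y u) *
      (if (∀ u, u ∉ S → x u = y u) then 1 else 0) := by
    intro x y
    have := congrFun (congrFun hA (siteSplit q S x)) (siteSplit q S y)
    rw [Matrix.submatrix_apply, Equiv.symm_apply_apply, Equiv.symm_apply_apply,
      Matrix.kroneckerMap_apply, Matrix.one_apply] at this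
    rw [this]
    congr 1
    refine if_congr ?_ rfl rfl
    constructor
    · intro h u hu
      exact congrFun h ⟨u, hu⟩
    · intro h
      funext u
      exact h u u.2
  intro x y z
  rw [key x y, key (S.piecewise x z)]
  have h1 : ∀ w : Λ → Fin q, (fun u : {u // u ∈ S} => S.piecewise w z u)
      = fun u : {u // u ∈ S} => w u := by
    intro w; funext u; simp
  rw [h1, h1]
  split_ifs with h2 h3
  · rfl
  · exact absurd (fun u hu => by simp [hu]) h3
  · simp

lemma EntrySupp.supportedOn {S : Finset Λ} {O : Matrix (Λ → Fin q) (Λ → Fin q) ℂ}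
    (z : Λ → Fin q) (h : EntrySupp S O) : SupportedOn q S O := by
  refine ⟨Matrix.of fun a b => O ((siteSplit q S).symm (a, fun u => z u))
    ((siteSplit q S).symm (b, fun u => z u)), ?_⟩
  ext ⟨a, b⟩ ⟨a', b'⟩
  rw [Matrix.submatrix_apply, Matrix.kroneckerMap_apply, Matrix.one_apply, Matrix.of_apply,
    h _ _ z]
  have h1 : ∀ (a : {u : Λ // u ∈ S} → Fin q) (b : {u : Λ // u ∉ S} → Fin q),
      S.piecewise ((siteSplit q S).symm (a, b)) z
        = (siteSplit q S).symm (a, fun u => z u) := by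
    intro a b
    funext u
    by_cases hu : u ∈ S <;> simp [siteSplit_symm_apply, hu]
  rw [h1, h1, mul_ite, mul_one, mul_zero]
  refine if_congr ?_ rfl rfl
  constructor
  · intro h
    funext u
    simpa [siteSplit_symm_apply, u.2] using h u u.2
  · rintro rfl u hu
    simp [siteSplit_symm_apply, hu]

lemma SupportedOn.mono {S T : Finset Λ} {O : Matrix (Λ → Fin q) (Λ → Fin q) ℂ}
    (z : Λ → Fin q) (hST : S ⊆ T) (h : SupportedOn q S O) : SupportedOn q T O := by
  apply EntrySupp.supportedOn z
  have h := h.entrySupp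
  intro x y w
  by_cases hS : ∀ u, u ∉ S → x u = y u
  · have hT : ∀ u, u ∉ T → x u = y u := fun u hu => hS u (fun h => hu (hST h))
    rw [if_pos hT, h x y z, h (T.piecewise x w) _ z, if_pos hS, if_pos]
    · have : ∀ x : Λ → Fin q, S.piecewise (T.piecewise x w) z = S.piecewise x z := by
        intro x; funext u
        by_cases hu : u ∈ S
        · simp [hu, hST hu]
        · simp [hu]
      rw [this, this]
    · intro u hu
      by_cases hu' : u ∈ T <;> simp [hu', hS u hu]
  · rw [h x y z, if_neg hS]
    split_ifs with hT
    · rw [h _ _ z, if_neg]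
      intro hc
      apply hS
      intro u hu
      by_cases hu' : u ∈ T
      · simpa [hu'] using hc u hu
      · exact hT u hu'
    · rfl

lemma SupportedOn.mul {S : Finset Λ} {O O' : Matrix (Λ → Fin q) (Λ → Fin q) ℂ}
    (h : SupportedOn q S O) (h' : SupportedOn q S O') : SupportedOn q S (O * O') := by
  obtain ⟨A, hA⟩ := h
  obtain ⟨B, hB⟩ := h'
  refine ⟨A * B, ?_⟩
  rw [← Matrix.submatrix_mul_equiv O O' _ (siteSplit q S).symm, hA, hB,
    ← Matrix.mul_kronecker_mul, one_mul]

lemma SupportedOn.one (S : Finset Λ) :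
    SupportedOn q S (1 : Matrix (Λ → Fin q) (Λ → Fin q) ℂ) :=
  ⟨1, by rw [Matrix.submatrix_one_equiv, Matrix.one_kronecker_one]⟩

lemma SupportedOn.conjTranspose {S : Finset Λ} {O : Matrix (Λ → Fin q) (Λ → Fin q) ℂ}
    (h : SupportedOn q S O) : SupportedOn q S Oᴴ := by
  obtain ⟨A, hA⟩ := h
  refine ⟨Aᴴ, ?_⟩
  rw [← Matrix.conjTranspose_submatrix, hA, Matrix.conjTranspose_kronecker,
    Matrix.conjTranspose_one]

/-- In each product only one intermediate configuration contributes: it is `y` on `S` and `x` off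
`S` for `O * O'`, and the other way round for `O' * O`. -/
lemma SupportedOn.commute {S T : Finset Λ} {O O' : Matrix (Λ → Fin q) (Λ → Fin q) ℂ}
    (hST : Disjoint S T) (h : SupportedOn q S O) (h' : SupportedOn q T O') :
    O * O' = O' * O := by
  have h := h.entrySupp
  have h' := h'.entrySupp
  have hd : ∀ u, u ∈ S → u ∉ T := fun u hu hu' => Finset.disjoint_left.mp hST hu hu'
  ext x y
  rw [Matrix.mul_apply, Matrix.mul_apply,
    Finset.sum_eq_single (S.piecewise y x), Finset.sum_eq_single (S.piecewise x y)]
  · have e1 : O x (S.piecewise y x) = O (S.piecewise x y) y := by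
      rw [h x _ x, h _ y x]
      simp +contextual
    have e2 : O' (S.piecewise y x) y = O' x (S.piecewise x y) := by
      rw [h' _ y x, h' x _ x]
      have a1 : T.piecewise (S.piecewise y x) x = x := by
        funext u
        by_cases hu : u ∈ S <;> by_cases hu' : u ∈ T <;> simp [hu, hu']
        exact absurd hu' (hd u hu)
      have a2 : T.piecewise (S.piecewise x y) x = T.piecewise y x := by
        funext u
        by_cases hu : u ∈ S <;> by_cases hu' : u ∈ T <;> simp [hu, hu']
        exact absurd hu' (hd u hu)
      have a3 : T.piecewise x x = x := by funext u; by_cases hu : u ∈ T <;> simp [hu]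
      rw [a1, a2, a3]
      refine if_congr ?_ rfl rfl
      refine forall_congr' fun u => imp_congr_right fun _ => ?_
      by_cases hu : u ∈ S <;> simp [hu]
    rw [e1, e2, mul_comm]
  · intro z _ hz
    by_cases h1 : ∀ u, u ∉ S → z u = y u
    · by_cases h2 : ∀ u, u ∉ T → x u = z u
      · exfalso
        apply hz
        funext u
        by_cases hu : u ∈ S
        · simp [hu, h2 u (hd u hu)]
        · simp [hu, h1 u hu]
      · rw [h' x z x, if_neg h2, zero_mul]
    · rw [h z y x, if_neg h1, mul_zero]
  · simp
  · intro z _ hz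
    by_cases h1 : ∀ u, u ∉ S → x u = z u
    · by_cases h2 : ∀ u, u ∉ T → z u = y u
      · exfalso
        apply hz
        funext u
        by_cases hu : u ∈ S
        · simp [hu, h2 u (hd u hu)]
        · simp [hu, h1 u hu]
      · rw [h' z y x, if_neg h2, mul_zero]
    · rw [h x z x, if_neg h1, zero_mul]
  · simp

/-- The matrix unit `|y⟩⟨y'|` on the region `S`, tensored with the identity off `S`. Only the
values of `y` and `y'` on `S` matter. -/
def siteUnit (S : Finset Λ) (y y' : Λ → Fin q) : Matrix (Λ → Fin q) (Λ → Fin q) ℂ :=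
  fun x z => if (∀ u ∈ S, x u = y u) ∧ z = S.piecewise y' x then 1 else 0

lemma siteUnit_supportedOn (S : Finset Λ) (y y' : Λ → Fin q) :
    SupportedOn q S (siteUnit S y y') := by
  apply EntrySupp.supportedOn y
  intro x z w
  unfold siteUnit
  rw [← ite_and]
  refine if_congr ?_ rfl rfl
  constructor
  · rintro ⟨h1, rfl⟩
    refine ⟨fun u hu => by simp [hu], fun u hu => by simp [hu, h1 u hu], ?_⟩
    funext u
    by_cases hu : u ∈ S <;> simp [hu]
  · rintro ⟨h1, h2, h3⟩
    refine ⟨fun u hu => by simpa [hu] using h2 u hu, ?_⟩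
    funext u
    by_cases hu : u ∈ S
    · simpa [hu] using congrFun h3 u
    · simp [hu, h1 u hu]

lemma siteUnit_mul {S T : Finset Λ} (hST : Disjoint S T) (y y' : Λ → Fin q) :
    siteUnit S y y' * siteUnit T y y' = siteUnit (S ∪ T) y y' := by
  have hd : ∀ u, u ∈ T → u ∉ S := fun u hu hu' => Finset.disjoint_left.mp hST hu' hu
  ext x z
  rw [Matrix.mul_apply, Finset.sum_eq_single (S.piecewise y' x)]
  · unfold siteUnit
    rw [ite_zero_mul_ite_zero, mul_one]
    refine if_congr ?_ rfl rfl
    have e : T.piecewise y' (S.piecewise y' x) = (S ∪ T).piecewise y' x := by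
      funext u
      by_cases hu : u ∈ S <;> by_cases hu' : u ∈ T <;> simp [hu, hu']
    rw [e]
    constructor
    · rintro ⟨⟨h1, -⟩, h2, h3⟩
      refine ⟨fun u hu => ?_, h3⟩
      rcases Finset.mem_union.mp hu with hu | hu
      · exact h1 u hu
      · simpa [hd u hu] using h2 u hu
    · rintro ⟨h1, h3⟩
      refine ⟨⟨fun u hu => h1 u (Finset.mem_union_left _ hu), rfl⟩, fun u hu => ?_, h3⟩
      simpa [hd u hu] using h1 u (Finset.mem_union_right _ hu)
  · intro w _ hw
    simp [siteUnit, hw]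
  · simp

end Support

/-! ### Unitaries from equal Gram matrices -/

section Uhlmann

/-- Equal Gram matrices differ by a unitary: the isometry between the column spaces extends to
the whole space. -/
lemma exists_unitary_of_gram_eq {X N : Type*} [Fintype X] [DecidableEq X] [Fintype N]
    [DecidableEq N] (E F : Matrix X N ℂ) (h : Eᴴ * E = Fᴴ * F) :
    ∃ U ∈ Matrix.unitaryGroup X ℂ, U * E = F := by
  let f := Matrix.toEuclideanLin E
  let g := Matrix.toEuclideanLin F
  have hnorm : ∀ v, ‖f v‖ = ‖g v‖ := by
    intro v
    have aux : ∀ G : Matrix X N ℂ, inner ℂ (Matrix.toEuclideanLin G v) (Matrix.toEuclideanLin G v)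
        = inner ℂ v (Matrix.toEuclideanLin (Gᴴ * G) v) := by
      intro G
      rw [← LinearMap.adjoint_inner_right, ← Matrix.toEuclideanLin_conjTranspose_eq_adjoint]
      congr 1
      simp [Matrix.toEuclideanLin, Matrix.toLpLin, Matrix.mulVec_mulVec]
    have h2 : inner ℂ (f v) (f v) = inner ℂ (g v) (g v) := by
      rw [aux E, aux F, h]
    rw [@norm_eq_sqrt_re_inner ℂ, @norm_eq_sqrt_re_inner ℂ, h2]
  obtain ⟨s, hs⟩ := f.rangeRestrict.exists_rightInverse_of_surjective
    (LinearMap.range_rangeRestrict f)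
  have hs' : ∀ w, f (s w) = w := fun w => congrArg Subtype.val (LinearMap.congr_fun hs w)
  let L : LinearMap.range f →ₗᵢ[ℂ] EuclideanSpace ℂ X :=
    { toLinearMap := g ∘ₗ s
      norm_map' := by
        intro w
        rw [LinearMap.comp_apply, ← hnorm, hs', Submodule.coe_norm] }
  have hL : ∀ v, L.extend (f v) = g v := by
    intro v
    have e : L.extend (f v) = g (s ⟨f v, LinearMap.mem_range_self f v⟩) :=
      L.extend_apply ⟨f v, LinearMap.mem_range_self f v⟩
    rw [e, ← sub_eq_zero, ← map_sub, ← norm_eq_zero, ← hnorm, norm_eq_zero, map_sub, hs', sub_self]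
  let U : Matrix X X ℂ := Matrix.toEuclideanLin.symm L.extend.toLinearMap
  have hU : Matrix.toEuclideanLin U = L.extend.toLinearMap := LinearEquiv.apply_symm_apply _ _
  refine ⟨U, ?_, ?_⟩
  · rw [Matrix.mem_unitaryGroup_iff', Matrix.star_eq_conjTranspose]
    apply Matrix.toEuclideanLin.injective
    apply LinearMap.ext
    intro v
    apply ext_inner_left ℂ
    intro w
    have : Matrix.toEuclideanLin (Uᴴ * U) v
        = Matrix.toEuclideanLin Uᴴ (Matrix.toEuclideanLin U v) := by
      simp [Matrix.toEuclideanLin, Matrix.toLpLin, Matrix.mulVec_mulVec]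
    rw [this, Matrix.toEuclideanLin_conjTranspose_eq_adjoint, LinearMap.adjoint_inner_right, hU]
    simp [Matrix.toEuclideanLin, Matrix.toLpLin]
  · apply Matrix.toEuclideanLin.injective
    apply LinearMap.ext
    intro v
    have : Matrix.toEuclideanLin (U * E) v
        = Matrix.toEuclideanLin U (Matrix.toEuclideanLin E v) := by
      simp [Matrix.toEuclideanLin, Matrix.toLpLin, Matrix.mulVec_mulVec]
    rw [this, hU]
    exact hL v

variable {q : ℕ} {Λ : Type*} [Fintype Λ] [DecidableEq Λ]

/-- Uhlmann-type statement: if all operators on `Rᶜ` have the same matrix elements between the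
columns of `E` as between the columns of `F`, then a unitary on `R` carries `E` to `F`. -/
lemma exists_unitary_supportedOn (R : Finset Λ) (z : Λ → Fin q)
    (E F : Matrix (Λ → Fin q) (Λ → Fin q) ℂ)
    (h : ∀ y y', Eᴴ * siteUnit Rᶜ y y' * E = Fᴴ * siteUnit Rᶜ y y' * F) :
    ∃ U ∈ Matrix.unitaryGroup (Λ → Fin q) ℂ, SupportedOn q R U ∧ U * E = F := by
  let e := (siteSplit q R).symm
  -- `E` reshaped so that only the `R`-part of its row index remains a row index
  let rs : Matrix (Λ → Fin q) (Λ → Fin q) ℂ →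
      Matrix ({u : Λ // u ∈ R} → Fin q) (({u : Λ // u ∉ R} → Fin q) × (Λ → Fin q)) ℂ :=
    fun G a p => G (e (a, p.1)) p.2
  have gram : ∀ G b k b' k', ((rs G)ᴴ * rs G) (b, k) (b', k')
      = (Gᴴ * siteUnit Rᶜ (e (fun u => z u, b)) (e (fun u => z u, b')) * G) k k' := by
    intro G b k b' k'
    have e1 : ∀ a b'', (∀ u ∈ Rᶜ, e (a, b'') u = e (fun u => z u, b) u) ↔ b'' = b := by
      intro a b''
      constructor
      · intro h
        funext u
        simpa [e, siteSplit_symm_apply, u.2] using h u (by simpa using u.2)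
      · rintro rfl u hu
        have hu : u ∉ R := by simpa using hu
        simp [e, siteSplit_symm_apply, hu]
    have e2 : ∀ a, Rᶜ.piecewise (e (fun u => z u, b')) (e (a, b)) = e (a, b') := by
      intro a
      funext u
      by_cases hu : u ∈ R <;> simp [e, siteSplit_symm_apply, hu]
    rw [Matrix.mul_assoc, Matrix.mul_apply, Matrix.mul_apply, ← e.sum_comp,
      Fintype.sum_prod_type]
    refine Finset.sum_congr rfl fun a _ => ?_
    rw [Finset.sum_eq_single b]
    · rw [Matrix.mul_apply, Finset.sum_eq_single (e (a, b'))]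
      · have : siteUnit Rᶜ (e (fun u => z u, b)) (e (fun u => z u, b')) (e (a, b)) (e (a, b'))
            = 1 := if_pos ⟨(e1 a b).2 rfl, (e2 a).symm⟩
        rw [this, one_mul]
        rfl
      · intro w _ hw
        rw [siteUnit, if_neg, zero_mul]
        rw [e2]
        exact fun h => hw h.2
      · simp
    · intro b'' _ hb
      rw [Matrix.mul_apply, Finset.sum_eq_zero, mul_zero]
      intro w _
      rw [siteUnit, if_neg, zero_mul]
      exact fun h => hb ((e1 _ _).1 h.1)
    · simp
  obtain ⟨V, hV, hVE⟩ := exists_unitary_of_gram_eq (rs E) (rs F) (by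
    ext ⟨b, k⟩ ⟨b', k'⟩
    rw [gram, gram, h])
  let K := V ⊗ₖ (1 : Matrix ({u : Λ // u ∉ R} → Fin q) ({u : Λ // u ∉ R} → Fin q) ℂ)
  refine ⟨K.submatrix e.symm e.symm, ?_, ⟨V, ?_⟩, ?_⟩
  · rw [Matrix.mem_unitaryGroup_iff', Matrix.star_eq_conjTranspose] at hV ⊢
    rw [Matrix.conjTranspose_submatrix, Matrix.submatrix_mul_equiv,
      Matrix.conjTranspose_kronecker, ← Matrix.mul_kronecker_mul, hV, Matrix.conjTranspose_one,
      one_mul, Matrix.one_kronecker_one, Matrix.submatrix_one_equiv]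
  · ext i j
    simp [K, e]
  · ext x k
    obtain ⟨⟨a, b⟩, rfl⟩ := e.surjective x
    have := congrFun (congrFun hVE a) (b, k)
    rw [Matrix.mul_apply] at this ⊢
    change _ = F (e (a, b)) k at this
    rw [← this, ← e.sum_comp, Fintype.sum_prod_type]
    refine Finset.sum_congr rfl fun a' _ => ?_
    rw [Finset.sum_eq_single b]
    · simp [K, rs]
    · intro b'' _ hb
      simp [K, Ne.symm hb]
    · simp

end Uhlmann

/-! ### Locality and decoupling in commuting-projector codes -/

namespace CommProjCode

variable {q : ℕ} {Λ : Type*} [Fintype Λ] [DecidableEq Λ]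

lemma boundary_compl (code : CommProjCode q Λ) (M : Finset Λ) :
    code.boundary Mᶜ = code.boundary M := by
  rw [boundary, boundary, intBoundary, intBoundary, compl_compl, Finset.union_comm]

lemma listProd_isHermitian_and_idem (code : CommProjCode q Λ) (l : List (Fin code.m)) :
    (l.map code.P).prod.IsHermitian ∧
      (l.map code.P).prod * (l.map code.P).prod = (l.map code.P).prod := by
  induction l with
  | nil => exact ⟨Matrix.isHermitian_one, one_mul 1⟩
  | cons a l ih =>
    have hc : Commute (code.P a) (l.map code.P).prod := by
      apply Commute.list_prod_right
      intro x hx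
      obtain ⟨b, -, rfl⟩ := List.mem_map.mp hx
      exact code.comm a b
    rw [List.map_cons, List.prod_cons]
    refine ⟨?_, ?_⟩
    · rw [Matrix.IsHermitian, Matrix.conjTranspose_mul, ih.1.eq, (code.herm a).eq, hc.eq]
    · exact IsIdempotentElem.mul_of_commute hc (code.idem a) ih.2

lemma proj_isHermitian (code : CommProjCode q Λ) : code.proj.IsHermitian :=
  (code.listProd_isHermitian_and_idem _).1

lemma proj_idem (code : CommProjCode q Λ) : code.proj * code.proj = code.proj :=
  (code.listProd_isHermitian_and_idem _).2

/-- Splitting of `Π` into the product `P` of the constraints inside `M` and the product `Q` of all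
others. A constraint that is not inside `M` can meet `M` only in the internal boundary, so `Q`
commutes with every operator on the interior of `M`. -/
lemma exists_factor (code : CommProjCode q Λ) (z : Λ → Fin q) (M : Finset Λ) :
    ∃ P Q : Matrix (Λ → Fin q) (Λ → Fin q) ℂ, code.proj = P * Q ∧ Commute P Q ∧
      P * P = P ∧ Q * Q = Q ∧ P.IsHermitian ∧ SupportedOn q M P ∧
      ∀ O, SupportedOn q (M \ code.boundary M) O → Commute O Q := by
  classical
  have hcomm : ∀ l l' : List (Fin code.m),
      Commute (l.map code.P).prod (l'.map code.P).prod := by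
    intro l l'
    apply Commute.list_prod_left
    intro x hx
    obtain ⟨a, -, rfl⟩ := List.mem_map.mp hx
    apply Commute.list_prod_right
    intro y hy
    obtain ⟨b, -, rfl⟩ := List.mem_map.mp hy
    exact code.comm a b
  have hsplit : ∀ l : List (Fin code.m), (l.map code.P).prod =
      ((l.filter fun a => code.S a ⊆ M).map code.P).prod *
        ((l.filter fun a => ¬ code.S a ⊆ M).map code.P).prod := by
    intro l
    induction l with
    | nil => simp
    | cons a l ih =>
      by_cases ha : code.S a ⊆ M
      · simp [ha, ih, mul_assoc]
      · have := (hcomm [a] (l.filter fun a => code.S a ⊆ M)).eq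
        simp only [List.map_cons, List.map_nil, List.prod_cons, List.prod_nil, mul_one] at this
        simp only [List.map_cons, List.prod_cons, ih, ha, decide_false, decide_true,
          not_false_eq_true, List.filter_cons_of_pos, List.filter_cons_of_neg, Bool.false_eq_true]
        rw [← mul_assoc, this, mul_assoc]
  refine ⟨_, _, hsplit _, hcomm _ _, (code.listProd_isHermitian_and_idem _).2,
    (code.listProd_isHermitian_and_idem _).2, (code.listProd_isHermitian_and_idem _).1, ?_, ?_⟩
  · apply List.prod_induction (SupportedOn q M)
    · intro a b ha hb
      exact ha.mul hb
    · exact SupportedOn.one M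
    · intro x hx
      obtain ⟨a, ha, rfl⟩ := List.mem_map.mp hx
      have : code.S a ⊆ M := by simpa using (List.mem_filter.mp ha).2
      exact (code.supp a).mono z this
  · intro O hO
    apply Commute.list_prod_right
    intro x hx
    obtain ⟨a, ha, rfl⟩ := List.mem_map.mp hx
    have ha : ¬ code.S a ⊆ M := by simpa using (List.mem_filter.mp ha).2
    refine SupportedOn.commute ?_ hO (code.supp a)
    rw [Finset.disjoint_left]
    intro u hu hua
    rw [Finset.mem_sdiff] at hu
    apply hu.2
    obtain ⟨w, hw, hwM⟩ := Finset.not_subset.mp ha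
    refine Finset.mem_union_left _ ?_
    simp only [intBoundary, extBoundary, Finset.mem_filter, Finset.mem_univ, true_and]
    exact ⟨by simpa using hu.1, a, hua, w, by simp [hw, hwM]⟩

/-- Decoupling: in the code, `M` is uncorrelated with the interior of the complement of `M`. With
`Π = P * Q` split along `Mᶜ`, the operator `P * O' * P` commutes with `Π`, and `P` commutes with
`O`. -/
lemma decouple (code : CommProjCode q Λ) (z : Λ → Fin q) (M : Finset Λ)
    {O O' : Matrix (Λ → Fin q) (Λ → Fin q) ℂ} (hO : SupportedOn q M O)
    (hO' : SupportedOn q (Mᶜ \ code.boundary M) O') {c : ℂ}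
    (hc : code.proj * O * code.proj = c • code.proj) :
    code.proj * (O * O') * code.proj = c • (code.proj * O' * code.proj) := by
  obtain ⟨P, Q, hPi, hPQ, hP, -, -, hPs, hOQ⟩ := code.exists_factor z Mᶜ
  have hOQ := hOQ O' (by rwa [boundary_compl])
  have hOP : O * P = P * O :=
    SupportedOn.commute (by simp [disjoint_compl_right]) hO hPs
  have hPP : code.proj * P = code.proj := by rw [hPi, mul_assoc, ← hPQ.eq, ← mul_assoc, hP]
  have hPP' : P * code.proj = code.proj := by rw [hPi, ← mul_assoc, hP]
  have hY : Commute (P * O' * P) code.proj := by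
    have h1 : Commute (P * O' * P) Q := (hPQ.mul_left hOQ).mul_left hPQ
    have h2 : Commute (P * O' * P) P := by
      rw [Commute, SemiconjBy, mul_assoc, hP, ← mul_assoc, ← mul_assoc, hP]
    rw [hPi]
    exact h2.mul_right h1
  have e1 : code.proj * O' * code.proj = code.proj * (P * O' * P) := by
    rw [← hY.eq]
    calc code.proj * O' * code.proj = (code.proj * P) * O' * (P * code.proj) := by
          rw [hPP, hPP']
      _ = code.proj * (P * O' * P) * code.proj := by simp only [mul_assoc]
      _ = (P * O' * P) * code.proj := by rw [← hY.eq, mul_assoc, code.proj_idem]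
  calc code.proj * (O * O') * code.proj
      = (code.proj * P) * O * O' * (P * code.proj) := by
        rw [hPP, hPP']; simp only [mul_assoc]
    _ = code.proj * O * ((P * O' * P) * code.proj) := by
        simp only [mul_assoc]
        rw [← mul_assoc P O, ← hOP]
        simp only [mul_assoc]
    _ = (code.proj * O * code.proj) * (P * O' * P) := by
        rw [hY.eq]; simp only [mul_assoc]
    _ = c • (code.proj * O' * code.proj) := by rw [hc, e1, Matrix.smul_mul]

/-! ### The product state on `M` -/

/-- The (unnormalized) vector on `M` read off from column `k` of `Π`, the sites outside `M` being
fixed to `z`. It lies in the support of the reduced code state of `M`. -/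
def localVec (code : CommProjCode q Λ) (M : Finset Λ) (z k x : Λ → Fin q) : ℂ :=
  code.proj (M.piecewise x z) k

/-- The operator `|φ⟩⟨z| ⊗ I`, where `φ` is `localVec` and `z` stands for the basis vector on `M`
labelled by the restriction of `z`. -/
def localOp (code : CommProjCode q Λ) (M : Finset Λ) (z k : Λ → Fin q) :
    Matrix (Λ → Fin q) (Λ → Fin q) ℂ :=
  fun x y => if y = M.piecewise z x then code.localVec M z k x else 0

lemma localOp_supportedOn (code : CommProjCode q Λ) (M : Finset Λ) (z k : Λ → Fin q) :
    SupportedOn q M (code.localOp M z k) := by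
  apply EntrySupp.supportedOn z
  intro x y w
  unfold localOp
  rw [← ite_and]
  have e : code.localVec M z k (M.piecewise x w) = code.localVec M z k x := by
    unfold localVec
    congr 1
    funext u
    by_cases hu : u ∈ M <;> simp [hu]
  rw [e]
  refine if_congr ?_ rfl rfl
  constructor
  · rintro rfl
    refine ⟨fun u hu => by simp [hu], ?_⟩
    funext u
    by_cases hu : u ∈ M <;> simp [hu]
  · rintro ⟨h1, h2⟩
    funext u
    by_cases hu : u ∈ M
    · simpa [hu] using congrFun h2 u
    · simp [hu, h1 u hu]

/-- An operator on `M` acting as the scalar `c` on the code acts as `c` on the range of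
`localOp`: the vector `localVec` is a partial column of `Π`, and `X` does not touch the sites outside
`M` at which that column is sliced. -/
lemma mul_localOp (code : CommProjCode q Λ) (M : Finset Λ) (z k : Λ → Fin q)
    {X : Matrix (Λ → Fin q) (Λ → Fin q) ℂ} (hX : SupportedOn q M X) {c : ℂ}
    (h : X * code.proj = c • code.proj) :
    X * code.localOp M z k = c • code.localOp M z k := by
  have hX := hX.entrySupp
  ext x y
  have h1 := congrFun (congrFun h (M.piecewise x z)) k
  rw [Matrix.mul_apply] at h1 ⊢
  rw [Matrix.smul_apply, localOp, smul_eq_mul, mul_ite, mul_zero]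
  split_ifs with hy
  · change _ = c * code.proj (M.piecewise x z) k at h1
    rw [localVec, ← h1]
    -- both sums run over configurations of `M`: the left one with `x` outside `M`, the right one
    -- with `z` outside `M`
    have hL : ∀ w, X x w * localOp code M z k w y
        = if (∀ u, u ∉ M → x u = w u) then X x w * code.proj (M.piecewise w z) k else 0 := by
      intro w
      by_cases hw : ∀ u, u ∉ M → x u = w u
      · rw [if_pos hw, localOp, if_pos, localVec]
        rw [hy]
        funext u
        by_cases hu : u ∈ M <;> simp [hu, hw]
      · rw [if_neg hw, hX x w z, if_neg hw, zero_mul]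
    have hR : ∀ w, X (M.piecewise x z) w * code.proj w k
        = if (∀ u, u ∉ M → z u = w u) then X (M.piecewise x z) w * code.proj w k else 0 := by
      intro w
      by_cases hw : ∀ u, u ∉ M → z u = w u
      · rw [if_pos hw]
      · rw [if_neg hw, hX _ w z, if_neg, zero_mul]
        intro hc
        apply hw
        intro u hu
        simpa [hu] using hc u hu
    rw [Finset.sum_congr rfl fun w _ => hL w, Finset.sum_congr rfl fun w _ => hR w,
      ← Finset.sum_filter, ← Finset.sum_filter]
    refine Finset.sum_bij' (fun w _ => M.piecewise w z) (fun w _ => M.piecewise w x) ?_ ?_ ?_ ?_ ?_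
    · intro w _
      simp +contextual
    · intro w _
      simp +contextual
    · intro w hw
      have hw : ∀ u, u ∉ M → x u = w u := by simpa using hw
      funext u
      by_cases hu : u ∈ M <;> simp [hu, hw]
    · intro w hw
      have hw : ∀ u, u ∉ M → z u = w u := by simpa using hw
      funext u
      by_cases hu : u ∈ M <;> simp [hu, hw]
    · intro w hw
      have hw : ∀ u, u ∉ M → x u = w u := by simpa using hw
      rw [hX x w z, if_pos hw]
  · apply Finset.sum_eq_zero
    intro w _
    by_cases hw : ∀ u, u ∉ M → x u = w u
    · rw [localOp, if_neg, mul_zero]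
      intro h
      apply hy
      rw [h]
      funext u
      by_cases hu : u ∈ M <;> simp [hu, hw]
    · rw [hX x w z, if_neg hw, zero_mul]

/-- The range of `localOp` reproduces the code expectation values of operators on the interior
of `M`. For `P` as in `exists_factor`, the operator `P * O * P` acts on the code as the scalar `c`,
hence by `mul_localOp` it does so on the range of `localOp`, where `P` acts as the identity. -/
lemma localOp_expect (code : CommProjCode q Λ) (M : Finset Λ) (z k : Λ → Fin q)
    {O : Matrix (Λ → Fin q) (Λ → Fin q) ℂ} (hO : SupportedOn q (M \ code.boundary M) O) {c : ℂ}
    (hc : code.proj * O * code.proj = c • code.proj) :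
    (code.localOp M z k)ᴴ * O * code.localOp M z k
      = c • ((code.localOp M z k)ᴴ * code.localOp M z k) := by
  obtain ⟨P, Q, hPi, hPQ, hP, hQ, hPh, hPs, hOQ⟩ := code.exists_factor z M
  have hOQ := hOQ O hO
  have hX : (P * O * P) * code.proj = c • code.proj := by
    rw [← hc, hPi]
    calc P * O * P * (P * Q) = P * O * (P * P) * Q := by simp only [mul_assoc]
      _ = P * O * (P * (Q * Q)) := by rw [hP, hQ, mul_assoc (P * O)]
      _ = P * (O * Q) * (P * Q) := by
        rw [← mul_assoc P Q Q, hPQ.eq]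
        simp only [mul_assoc]
        rw [← hPQ.eq]
      _ = P * Q * O * (P * Q) := by rw [hOQ.eq]; simp only [mul_assoc]
  have hXT := code.mul_localOp M z k
    ((hPs.mul (hO.mono z Finset.sdiff_subset)).mul hPs) hX
  have hPT : P * code.localOp M z k = code.localOp M z k := by
    have h1 : P * code.proj = (1 : ℂ) • code.proj := by rw [hPi, ← mul_assoc, hP, one_smul]
    simpa using code.mul_localOp M z k hPs h1
  have hTP : (code.localOp M z k)ᴴ * P = (code.localOp M z k)ᴴ := by
    have := congrArg Matrix.conjTranspose hPT
    rwa [Matrix.conjTranspose_mul, hPh.eq] at this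
  calc (code.localOp M z k)ᴴ * O * code.localOp M z k
      = ((code.localOp M z k)ᴴ * P) * O * (P * code.localOp M z k) := by rw [hPT, hTP]
    _ = (code.localOp M z k)ᴴ * ((P * O * P) * code.localOp M z k) := by simp only [mul_assoc]
    _ = _ := by rw [hXT, Matrix.mul_smul]

lemma localOp_mul_proj_mul (code : CommProjCode q Λ) (M : Finset Λ) (z k x y : Λ → Fin q) :
    (code.localOp M z k * code.proj * (code.localOp M z k)ᴴ) x y
      = code.localVec M z k x * star (code.localVec M z k y) *
        code.proj (M.piecewise z x) (M.piecewise z y) := by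
  rw [Matrix.mul_apply, Finset.sum_eq_single (M.piecewise z y), Matrix.mul_apply,
    Finset.sum_eq_single (M.piecewise z x)]
  · simp only [localOp, Matrix.conjTranspose_apply, if_true]
    ring
  · intro w _ hw
    simp [localOp, hw]
  · simp
  · intro w _ hw
    simp [localOp, hw]
  · simp

/-! ### The disentangling unitary -/

/-- The unnormalized disentangling map `localOp` is, on the code, a positive multiple of an
isometry. -/
lemma exists_ratio (code : CommProjCode q Λ) (M : Finset Λ) (hM : code.Correctable M)
    {k₁ k₀ : Λ → Fin q} (hk : code.proj k₁ k₀ ≠ 0) :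
    ∃ r : ℝ, 0 < r ∧ code.proj * ((code.localOp M k₁ k₀)ᴴ * code.localOp M k₁ k₀) * code.proj
      = (r : ℂ) • code.proj := by
  have hPh := code.proj_isHermitian
  have hPi := code.proj_idem
  have hTs := code.localOp_supportedOn M k₁ k₀
  obtain ⟨c, hc⟩ := hM _ (hTs.conjTranspose.mul hTs)
  -- `c` is the ratio of the squared norms of the `k₀` columns of `localOp * Π` and `Π`
  suffices h : ∃ r : ℝ, 0 < r ∧ (r : ℂ) = c by
    obtain ⟨r, hr, rfl⟩ := h
    exact ⟨r, hr, hc⟩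
  have hent : ∀ B : Matrix (Λ → Fin q) (Λ → Fin q) ℂ,
      (Bᴴ * B) k₀ k₀ = ((∑ i, Complex.normSq (B i k₀) : ℝ) : ℂ) := by
    intro B
    rw [Matrix.mul_apply, Complex.ofReal_sum]
    refine Finset.sum_congr rfl fun i _ => ?_
    rw [Complex.normSq_eq_conj_mul_self]
    rfl
  have hpos : ∀ B : Matrix (Λ → Fin q) (Λ → Fin q) ℂ, B k₁ k₀ ≠ 0 →
      0 < ∑ i, Complex.normSq (B i k₀) := by
    intro B hB
    exact Finset.sum_pos' (fun i _ => Complex.normSq_nonneg _)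
      ⟨k₁, Finset.mem_univ _, Complex.normSq_pos.2 hB⟩
  have hTk : (code.localOp M k₁ k₀ * code.proj) k₁ k₀ ≠ 0 := by
    rw [Matrix.mul_apply, Finset.sum_eq_single k₁]
    · simp [localOp, localVec, Finset.piecewise_same, hk]
    · intro w _ hw
      simp [localOp, Finset.piecewise_same, hw]
    · simp
  have h1 := congrFun (congrFun hc k₀) k₀
  have h2 : code.proj * ((code.localOp M k₁ k₀)ᴴ * code.localOp M k₁ k₀) * code.proj
      = (code.localOp M k₁ k₀ * code.proj)ᴴ * (code.localOp M k₁ k₀ * code.proj) := by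
    rw [Matrix.conjTranspose_mul, hPh.eq]
    simp only [mul_assoc]
  have h3 : code.projᴴ * code.proj = code.proj := by rw [hPh.eq, hPi]
  have h4 := hent code.proj
  rw [h3] at h4
  rw [h2, hent, Matrix.smul_apply, h4, smul_eq_mul] at h1
  have ha := hpos _ hk
  have hb := hpos _ hTk
  refine ⟨_, div_pos hb ha, ?_⟩
  rw [Complex.ofReal_div, h1, mul_div_assoc, div_self, mul_one]
  exact_mod_cast ha.ne'

lemma exists_sqrt_inv {t : ℝ} (ht : 0 < t) : ∃ ρ : ℂ, star ρ = ρ ∧ ρ * ρ = ((t⁻¹ : ℝ) : ℂ) := by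
  refine ⟨(((√t)⁻¹ : ℝ) : ℂ), Complex.conj_ofReal _, ?_⟩
  rw [← Complex.ofReal_mul, ← mul_inv, Real.mul_self_sqrt ht.le]

/-- The rescaled `localOp` preserves all matrix elements, between code vectors, of operators off
the boundary of `M`; hence on the code it agrees with a unitary on the boundary. -/
lemma exists_disentangler (code : CommProjCode q Λ) (M : Finset Λ) (hM : code.Correctable M)
    {k₁ k₀ : Λ → Fin q} {T : Matrix (Λ → Fin q) (Λ → Fin q) ℂ} (hT : T = code.localOp M k₁ k₀)
    {r : ℝ} (hr : 0 < r) (hc : code.proj * (Tᴴ * T) * code.proj = (r : ℂ) • code.proj) :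
    ∃ U ∈ Matrix.unitaryGroup (Λ → Fin q) ℂ, SupportedOn q (code.boundary M) U ∧
      U * code.proj * Uᴴ = ((r⁻¹ : ℝ) : ℂ) • (T * code.proj * Tᴴ) := by
  have hPh := code.proj_isHermitian
  have hPi := code.proj_idem
  have hTs : SupportedOn q M T := hT ▸ code.localOp_supportedOn M k₁ k₀
  obtain ⟨ρ, hρ, hsq⟩ := exists_sqrt_inv hr
  obtain ⟨F, hF⟩ : ∃ F, F = ρ • (T * code.proj) := ⟨_, rfl⟩
  have hFh : Fᴴ = ρ • (code.proj * Tᴴ) := by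
    rw [hF, Matrix.conjTranspose_smul, Matrix.conjTranspose_mul, hPh.eq, hρ]
  obtain ⟨U, hU, hUs, hUF⟩ := exists_unitary_supportedOn (code.boundary M) k₁ code.proj F (by
    intro y y'
    have hAD : (code.boundary M)ᶜ = (M \ code.boundary M) ∪ (Mᶜ \ code.boundary M) := by
      ext u
      simp only [Finset.mem_compl, Finset.mem_union, Finset.mem_sdiff]
      tauto
    have hdisj : Disjoint (M \ code.boundary M) (Mᶜ \ code.boundary M) :=
      Finset.disjoint_of_subset_left Finset.sdiff_subset
        (Finset.disjoint_of_subset_right Finset.sdiff_subset disjoint_compl_right)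
    rw [hAD, ← siteUnit_mul hdisj]
    have hA := siteUnit_supportedOn (M \ code.boundary M) y y'
    have hD := siteUnit_supportedOn (Mᶜ \ code.boundary M) y y'
    generalize siteUnit (M \ code.boundary M) y y' = A at hA
    generalize siteUnit (Mᶜ \ code.boundary M) y y' = D at hD
    have hA' := hA.mono k₁ Finset.sdiff_subset
    obtain ⟨a, ha⟩ := hM A hA'
    have hTD : T * D = D * T := SupportedOn.commute
      (Finset.disjoint_of_subset_right Finset.sdiff_subset disjoint_compl_right) hTs hD
    have hTAT : Tᴴ * A * T = a • (Tᴴ * T) :=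
      hT ▸ code.localOp_expect M k₁ k₀ hA ha
    rw [hPh.eq, code.decouple k₁ M hA' hD ha, hFh]
    calc a • (code.proj * D * code.proj)
        = (((r⁻¹ : ℝ) : ℂ) * a) • (code.proj * ((Tᴴ * T) * D) * code.proj) := by
          rw [code.decouple k₁ M (hTs.conjTranspose.mul hTs) hD hc, smul_smul]
          congr 1
          have : (r : ℂ) ≠ 0 := by exact_mod_cast hr.ne'
          push_cast
          field_simp
      _ = ((r⁻¹ : ℝ) : ℂ) • (code.proj * ((Tᴴ * A * T) * D) * code.proj) := by
          rw [hTAT]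
          simp only [Matrix.smul_mul, Matrix.mul_smul, smul_smul]
      _ = ((r⁻¹ : ℝ) : ℂ) • (code.proj * Tᴴ * (A * D) * (T * code.proj)) := by
          have e : code.proj * ((Tᴴ * A * T) * D) * code.proj
              = code.proj * Tᴴ * (A * D) * (T * code.proj) := by
            rw [mul_assoc (Tᴴ * A) T D, hTD]
            simp only [mul_assoc]
          rw [e]
      _ = _ := by
          rw [hF, Matrix.smul_mul, Matrix.smul_mul, Matrix.mul_smul, smul_smul, hsq])
  refine ⟨U, hU, hUs, ?_⟩
  calc U * code.proj * Uᴴ = (U * code.proj) * (U * code.proj)ᴴ := by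
        rw [Matrix.conjTranspose_mul, hPh.eq, mul_assoc, mul_assoc, ← mul_assoc code.proj, hPi]
    _ = ((r⁻¹ : ℝ) : ℂ) • (T * (code.proj * code.proj) * Tᴴ) := by
        rw [hUF, hFh]
        simp only [hF, Matrix.smul_mul, Matrix.mul_smul, smul_smul, hsq, mul_assoc]
    _ = _ := by rw [hPi]

end CommProjCode

/-- **Disentangling Lemma.** If `M` and its external boundary `∂₊M` are correctable,
then there is a unitary `U` supported on the boundary `∂M`, a unit vector `φ` on `M`,
and a projector `Pr` on the complement of `M`, such that, after the natural reindexing,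
`U Π U† = |φ⟩⟨φ| ⊗ Pr`. -/
theorem disentangling_lemma {q : ℕ} (hq : 2 ≤ q) {Λ : Type*} [Fintype Λ] [DecidableEq Λ]
    (code : CommProjCode q Λ) (M : Finset Λ)
    (hM : code.Correctable M) (hbM : code.Correctable (code.extBoundary M)) :
    ∃ U : Matrix (Λ → Fin q) (Λ → Fin q) ℂ,
      U ∈ Matrix.unitaryGroup (Λ → Fin q) ℂ ∧
      SupportedOn q (code.boundary M) U ∧
      ∃ φ : ({u : Λ // u ∈ M} → Fin q) → ℂ,
        (∑ s, star (φ s) * φ s) = 1 ∧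
        ∃ Pr : Matrix ({u : Λ // u ∉ M} → Fin q) ({u : Λ // u ∉ M} → Fin q) ℂ,
          Pr.IsHermitian ∧ Pr * Pr = Pr ∧
          (U * code.proj * Uᴴ).submatrix (siteSplit q M).symm (siteSplit q M).symm =
            (Matrix.vecMulVec φ (fun s => star (φ s))) ⊗ₖ Pr := by
  obtain ⟨k₁, k₀, hk⟩ : ∃ k₁ k₀, code.proj k₁ k₀ ≠ 0 := by
    by_contra! h
    exact code.nonzero (Matrix.ext h)
  have hPh := code.proj_isHermitian
  have hPi := code.proj_idem
  obtain ⟨r, hr, hc⟩ := code.exists_ratio M hM hk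
  obtain ⟨U, hU, hUs, hUP⟩ := code.exists_disentangler M hM rfl hr hc
  let φ₀ : ({u : Λ // u ∈ M} → Fin q) → ℂ := fun s =>
    code.localVec M k₁ k₀ ((siteSplit q M).symm (s, fun u => k₁ u))
  let n : ℝ := ∑ s, Complex.normSq (φ₀ s)
  have hφ₀ : φ₀ (fun u => k₁ u) ≠ 0 := by
    have : M.piecewise ((siteSplit q M).symm (fun u => k₁ u, fun u => k₁ u)) k₁ = k₁ := by
      funext u
      by_cases hu : u ∈ M <;> simp [siteSplit_symm_apply, hu]
    simpa only [φ₀, CommProjCode.localVec, this] using hk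
  have hn : 0 < n := Finset.sum_pos' (fun i _ => Complex.normSq_nonneg _)
    ⟨_, Finset.mem_univ _, Complex.normSq_pos.2 hφ₀⟩
  obtain ⟨ν, hν, hnsq⟩ := CommProjCode.exists_sqrt_inv hn
  have hnC : (n : ℂ) ≠ 0 := by exact_mod_cast hn.ne'
  let φ : ({u : Λ // u ∈ M} → Fin q) → ℂ := fun s => ν * φ₀ s
  have hφmul : ∀ s t, φ s * star (φ t) = ((n⁻¹ : ℝ) : ℂ) * (φ₀ s * star (φ₀ t)) := by
    intro s t
    rw [← hnsq]
    simp only [φ, star_mul', hν]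
    ring
  have hφ1 : (∑ s, star (φ s) * φ s) = 1 := by
    have : ∀ s, star (φ s) * φ s = ((n⁻¹ : ℝ) : ℂ) * ((Complex.normSq (φ₀ s) : ℝ) : ℂ) := by
      intro s
      rw [mul_comm, hφmul, ← Complex.mul_conj]
      rfl
    rw [Finset.sum_congr rfl fun s _ => this s, ← Finset.mul_sum, ← Complex.ofReal_sum,
      ← Complex.ofReal_mul, inv_mul_cancel₀ hn.ne', Complex.ofReal_one]
  let j : ({u : Λ // u ∉ M} → Fin q) → (Λ → Fin q) := fun b =>
    (siteSplit q M).symm (fun u => k₁ u, b)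
  let Pr : Matrix ({u : Λ // u ∉ M} → Fin q) ({u : Λ // u ∉ M} → Fin q) ℂ :=
    ((n * r⁻¹ : ℝ) : ℂ) • code.proj.submatrix j j
  have hmain : (U * code.proj * Uᴴ).submatrix (siteSplit q M).symm (siteSplit q M).symm =
      (Matrix.vecMulVec φ (fun s => star (φ s))) ⊗ₖ Pr := by
    ext ⟨s, b⟩ ⟨t, b'⟩
    have e1 : ∀ s b, M.piecewise k₁ ((siteSplit q M).symm (s, b)) = j b := by
      intro s b
      funext u
      by_cases hu : u ∈ M <;> simp [j, siteSplit_symm_apply, hu]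
    have e2 : ∀ s b, code.localVec M k₁ k₀ ((siteSplit q M).symm (s, b)) = φ₀ s := by
      intro s b
      simp only [φ₀, CommProjCode.localVec]
      congr 1
      funext u
      by_cases hu : u ∈ M <;> simp [siteSplit_symm_apply, hu]
    rw [hUP, Matrix.submatrix_apply, Matrix.smul_apply, code.localOp_mul_proj_mul, e1, e1, e2, e2,
      Matrix.kroneckerMap_apply, Matrix.vecMulVec_apply, hφmul, smul_eq_mul]
    change _ = ((n⁻¹ : ℝ) : ℂ) * (φ₀ s * star (φ₀ t)) *
      (((n * r⁻¹ : ℝ) : ℂ) * code.proj (j b) (j b'))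
    push_cast
    field_simp
  refine ⟨U, hU, hUs, φ, hφ1, Pr, ?_, ?_, hmain⟩
  · rw [Matrix.IsHermitian, Matrix.conjTranspose_smul, Matrix.conjTranspose_submatrix, hPh.eq]
    simp only [Complex.star_def, Complex.conj_ofReal, Pr]
  · -- the left-hand side of `hmain` is idempotent, and the factor `|φ⟩⟨φ|` can be cancelled
    have hid : (U * code.proj * Uᴴ) * (U * code.proj * Uᴴ) = U * code.proj * Uᴴ := by
      have hUU : Uᴴ * U = 1 := Matrix.mem_unitaryGroup_iff'.mp hU
      calc (U * code.proj * Uᴴ) * (U * code.proj * Uᴴ)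
          = U * (code.proj * ((Uᴴ * U) * code.proj)) * Uᴴ := by simp only [mul_assoc]
        _ = _ := by rw [hUU, one_mul, hPi]
    have hφφ : Matrix.vecMulVec φ (fun s => star (φ s)) * Matrix.vecMulVec φ (fun s => star (φ s))
        = Matrix.vecMulVec φ (fun s => star (φ s)) := by
      have : (fun s => star (φ s)) ⬝ᵥ φ = 1 := hφ1
      rw [Matrix.vecMulVec_mul_vecMulVec, this]
      simp
    have h1 : Matrix.vecMulVec φ (fun s => star (φ s)) ⊗ₖ (Pr * Pr)
        = Matrix.vecMulVec φ (fun s => star (φ s)) ⊗ₖ Pr := by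
      rw [← hmain, ← hid, ← Matrix.submatrix_mul_equiv _ _ _ (siteSplit q M).symm, hmain,
        ← Matrix.mul_kronecker_mul, hφφ]
    ext b b'
    have h2 := congrFun (congrFun h1 (fun u => k₁ u, b)) (fun u => k₁ u, b')
    rw [Matrix.kroneckerMap_apply, Matrix.kroneckerMap_apply, Matrix.vecMulVec_apply] at h2
    refine mul_left_cancel₀ ?_ h2
    rw [hφmul]
    refine mul_ne_zero (by exact_mod_cast inv_ne_zero hn.ne') (mul_ne_zero hφ₀ ?_)
    exact star_ne_zero.mpr hφ₀
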